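/- Let v ∈ Ω, n ≥ 1, and let (cᵢ)_{i∈ℤ} be the unique (n−1, n)-partition of v. Then: (1) no two consecutive blocks are both s_{n−1}, i.e. it never happens that c_{i+1} − cᵢ = c_{i+2} − c_{i+1} = q_{n−1}; and (2) every maximal run of consecutive blocks equal to sₙ consists of exactly a_{n+1} or a_{n+1} + 1 blocks. -/

import Mathlib

open scoped Classical

noncomputable section

/-- The Gauss map. -/
def gaussMap (x : ℝ) : ℝ := Int.fract x⁻¹

/-- `pq α k` is the partial quotient `a_{k+1}` of the continued fraction of `α`. -/
def pq (α : ℝ) (k : ℕ) : ℕ := ⌊(gaussMap^[k] α)⁻¹⌋₊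

/-- `qd α (n+1)` is the convergent denominator `q_n`; `qd α 0 = q_{-1} = 0`, `qd α 1 = q₀ = 1`. -/
def qd (α : ℝ) : ℕ → ℕ
  | 0 => 0
  | 1 => 1
  | (n+2) => pq α n * qd α (n+1) + qd α n

/-- The circle map sequence of rotation number `α` (value `true` means letter `1`). -/
def v0 (α : ℝ) (n : ℤ) : Bool := decide (1 - α ≤ Int.fract ((n : ℝ) * α))

/-- The word `(v₀(m+1), …, v₀(m+n))`. -/
def word (α : ℝ) (m n : ℕ) : List Bool :=
  (List.range n).map (fun i => v0 α ((m : ℤ) + 1 + i))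

/-- `w` is a factor (admissible word) of `v₀`. -/
def IsFactor (α : ℝ) (w : List Bool) : Prop := ∃ m : ℕ, w = word α m w.length

/-- `w` occurs as a subword of the prefix `(v₀(1), …, v₀(N))`. -/
def OccursIn (α : ℝ) (w : List Bool) (N : ℕ) : Prop :=
  ∃ m : ℕ, m + w.length ≤ N ∧ w = word α m w.length

/-- `exhaust α n` is `f(n)`: the least `N` such that every factor of length `n`
occurs in `(v₀(1), …, v₀(N))`. -/
def exhaust (α : ℝ) (n : ℕ) : ℕ :=
  sInf {N | ∀ w : List Bool, w.length = n → IsFactor α w → OccursIn α w N}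

/-- number of occurrences of `w` in the prefix `(v₀(1), …, v₀(N))`. -/
def occCount (α : ℝ) (w : List Bool) (N : ℕ) : ℕ :=
  ((Finset.range N).filter (fun m => m + w.length ≤ N ∧ word α m w.length = w)).card

/-- the word `(v(m), v(m+1), …, v(m+n-1))` of a two-sided sequence. -/
def wordAt (v : ℤ → Bool) (m : ℤ) (n : ℕ) : List Bool :=
  (List.range n).map (fun i => v (m + i))

/-- the hull `Ω`: closure of the set of translates of `v₀`. -/
def hull (α : ℝ) : Set (ℤ → Bool) :=
  closure {u | ∃ m : ℤ, u = fun n => v0 α (n - m)}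


/-- `sw α (n+1)` is the word `sₙ`: `sw α 0 = s₋₁ = 1`, `sw α 1 = s₀ = 0`,
`sw α 2 = s₁ = s₀^{a₁-1} s₋₁`, and `s_{n+1} = sₙ^{a_{n+1}} s_{n-1}`. -/
def sw (α : ℝ) : ℕ → List Bool
  | 0 => [true]
  | 1 => [false]
  | 2 => (List.replicate (pq α 0 - 1) [false]).flatten ++ [true]
  | (n+3) => (List.replicate (pq α (n+1)) (sw α (n+2))).flatten ++ sw α (n+1)

/-- The block of the partition `c` starting at index `i` is the word `s_{lev - 1}`
(of length `q_{lev-1} = qd α lev`), occupying sites `c i + 1, …, c (i+1)` of `v`. -/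
def BlockIs (α : ℝ) (v : ℤ → Bool) (c : ℤ → ℤ) (i : ℤ) (lev : ℕ) : Prop :=
  c (i + 1) - c i = (qd α lev : ℤ) ∧ wordAt v (c i + 1) (qd α lev) = sw α lev

/-- `c` is an `(n-1, n)`-partition of `v`: a strictly increasing two-sided sequence of
cut points, with `c 0 ≤ 0 < c 1`, tending to `±∞`, each of whose blocks is
`s_{n-1}` or `sₙ`. -/
def IsPartition (α : ℝ) (v : ℤ → Bool) (n : ℕ) (c : ℤ → ℤ) : Prop :=
  StrictMono c ∧ c 0 ≤ 0 ∧ 0 < c 1 ∧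
  Filter.Tendsto c Filter.atTop Filter.atTop ∧
  Filter.Tendsto c Filter.atBot Filter.atBot ∧
  ∀ i : ℤ, BlockIs α v c i n ∨ BlockIs α v c i (n + 1)

/-!
Read a partition into blocks `sₙ₋₁`, `sₙ` as a two-letter sequence, `true` for `sₙ₋₁` and `false`
for `sₙ`. Every factor of `v ∈ Ω` of length `N` contains `Nα` letters `1` up to an error less
than `1`. Since `sₙ₊₁ = sₙ ^ aₙ₊₁ sₙ₋₁`, the coding at level `n` is obtained from the one at level
`n + 1` by the substitution `true ↦ false`, `false ↦ false ^ aₙ₊₁ true`, and the balance property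
survives desubstitution: if `|#true - x #false| < 1 + x` for all factors of the substituted words,
then the same holds for the original words with `x⁻¹ - aₙ₊₁` in place of `x`. On the slopes this is
the Gauss map `G` (at the bottom, `a₁` is replaced by `a₁ - 1` and `x` is `α / (1 - α)`, which leads
to `G(α)` as well), so at level `n ≥ 1` one has balance with slope `x = Gⁿ(α) ∈ (0, 1)`, whose
reciprocal has integer part `aₙ₊₁`. Evaluating the inequality on the words `true true`, `false ^ l`
and `true false ^ l true` gives the theorem.
-/

section

variable {α : ℝ}

/-! ### The Gauss map -/

theorem gaussMap_zero : gaussMap 0 = 0 := by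
  simp [gaussMap]

theorem floor_inv_add_gaussMap {x : ℝ} (hx : 0 ≤ x) : (⌊x⁻¹⌋₊ : ℝ) + gaussMap x = x⁻¹ := by
  rw [natCast_floor_eq_intCast_floor (inv_nonneg.mpr hx), gaussMap, Int.floor_add_fract]

theorem gaussMap_iterate_mem_Ico (h0 : 0 ≤ α) (h1 : α < 1) (n : ℕ) :
    gaussMap^[n] α ∈ Set.Ico 0 1 := by
  cases n with
  | zero => exact ⟨h0, h1⟩
  | succ n =>
    rw [Function.iterate_succ_apply']
    exact ⟨Int.fract_nonneg _, Int.fract_lt_one _⟩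

theorem gaussMap_iterate_ne_zero_of_succ {n : ℕ} (h : gaussMap^[n + 1] α ≠ 0) :
    gaussMap^[n] α ≠ 0 := by
  intro hn
  rw [Function.iterate_succ_apply', hn, gaussMap_zero] at h
  exact h rfl

theorem irrational_gaussMap {x : ℝ} (hx : Irrational x) : Irrational (gaussMap x) :=
  hx.inv.sub_intCast _

theorem irrational_gaussMap_iterate (hα : Irrational α) (n : ℕ) :
    Irrational (gaussMap^[n] α) := by
  induction n with
  | zero => exact hα
  | succ n ih => exact Function.iterate_succ_apply' gaussMap n α ▸ irrational_gaussMap ih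

/-- The exponent `e` in the recursion `sw α (k + 2) = sw α (k + 1) ^ e ++ sw α k`, namely the
partial quotient `aₖ₊₁`, except that it is `a₁ - 1` for `k = 0`. -/
def swExp (α : ℝ) : ℕ → ℕ
  | 0 => pq α 0 - 1
  | k + 1 => pq α (k + 1)

/-- The asymptotic ratio of the number of blocks `sw α n` to the number of blocks `sw α (n + 1)` in
a partition into such blocks. -/
def blockRatio (α : ℝ) : ℕ → ℝ
  | 0 => α / (1 - α)
  | n + 1 => gaussMap^[n + 1] α

theorem swExp_add_blockRatio_succ (h0 : 0 < α) (h1 : α < 1) (n : ℕ) :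
    swExp α n + blockRatio α (n + 1) = (blockRatio α n)⁻¹ := by
  have hfloor := floor_inv_add_gaussMap (gaussMap_iterate_mem_Ico h0.le h1 n).1
  cases n with
  | zero =>
    have hpq : 1 ≤ pq α 0 := Nat.one_le_floor_iff _ |>.mpr ((one_le_inv₀ h0).mpr h1.le)
    have hinv : (α / (1 - α))⁻¹ = α⁻¹ - 1 := by field_simp
    rw [blockRatio, blockRatio, hinv, swExp, Nat.cast_sub hpq]
    simp only [pq, Function.iterate_zero, id_eq, zero_add, Function.iterate_one] at hfloor ⊢
    linarith
  | succ n => rwa [blockRatio, blockRatio, swExp, pq, Function.iterate_succ_apply' _ (n + 1)]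

theorem blockRatio_pos (h0 : 0 < α) (h1 : α < 1) {n : ℕ} (hn : gaussMap^[n] α ≠ 0) :
    0 < blockRatio α n := by
  cases n with
  | zero => exact div_pos h0 (sub_pos.mpr h1)
  | succ n => exact (gaussMap_iterate_mem_Ico h0.le h1 (n + 1)).1.lt_of_ne' hn

/-! ### Block substitutions -/

section Substitution

variable {β : Type*} (A B : List β)

/-- The concatenation of blocks coded by a binary word: `true` stands for the block `A`, `false` for
the block `B`. -/
def substWord (w : List Bool) : List β :=
  w.flatMap fun b => if b then A else B

@[simp]
theorem substWord_nil : substWord A B [] = [] := rfl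

@[simp]
theorem substWord_cons (b : Bool) (w : List Bool) :
    substWord A B (b :: w) = (if b then A else B) ++ substWord A B w := rfl

@[simp]
theorem substWord_append (u w : List Bool) :
    substWord A B (u ++ w) = substWord A B u ++ substWord A B w :=
  List.flatMap_append

theorem substWord_substWord (C D w : List Bool) :
    substWord A B (substWord C D w) = substWord (substWord A B C) (substWord A B D) w := by
  induction w with
  | nil => rfl
  | cons b w ih => cases b <;> simp [ih]

theorem substWord_replicate_false (k : ℕ) :
    substWord A B (List.replicate k false) = (List.replicate k B).flatten := by
  simp [substWord, List.flatMap_replicate]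

theorem substWord_true_false (w : List Bool) : substWord [true] [false] w = w := by
  induction w with
  | nil => rfl
  | cons b w ih => cases b <;> simp [ih]

variable {A B}

theorem length_le_length_substWord (hA : A ≠ []) (hB : B ≠ []) (w : List Bool) :
    w.length ≤ (substWord A B w).length := by
  have hA := List.length_pos_iff.mpr hA
  have hB := List.length_pos_iff.mpr hB
  induction w with
  | nil => simp
  | cons b w ih =>
    simp only [List.length_cons, substWord_cons, List.length_append]
    split_ifs <;> omega

end Substitution

/-- The substitution `true ↦ false`, `false ↦ falseᵃ true`, which turns codings by the blocks
`sₙ`, `sₙ₊₁` into codings by the blocks `sₙ₋₁`, `sₙ` when `sₙ₊₁ = sₙ ^ a sₙ₋₁`. -/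
def sturmianSubst (a : ℕ) (w : List Bool) : List Bool :=
  substWord [false] (List.replicate a false ++ [true]) w

theorem replicate_false_prefix_sturmianSubst {a k : ℕ} {w : List Bool} (hkw : k ≤ w.length)
    (hka : k ≤ a) : List.replicate k false <+: sturmianSubst a w := by
  induction w generalizing k with
  | nil => simp_all
  | cons b w ih =>
    cases b with
    | false =>
      have hprefix : List.replicate k false <+: List.replicate a false :=
        ⟨List.replicate (a - k) false, by
          rw [List.replicate_append_replicate, Nat.add_sub_cancel' hka]⟩
      simpa [sturmianSubst] using hprefix.trans (List.prefix_append _ _)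
    | true =>
      cases k with
      | zero => simp
      | succ k =>
        have hk : List.replicate k false <+: sturmianSubst a w :=
          ih (by simpa using hkw) (by omega)
        simpa [sturmianSubst, List.replicate_succ] using hk

theorem sw_add_two (k : ℕ) :
    sw α (k + 2) = (List.replicate (swExp α k) (sw α (k + 1))).flatten ++ sw α k := by
  cases k <;> simp [sw, swExp]

theorem getLast?_sw (n : ℕ) : (sw α n).getLast? = some (decide (Even n)) := by
  induction n using Nat.twoStepInduction with
  | zero => simp [sw]
  | one => simp [sw]
  | more k ih _ =>
    rw [sw_add_two, List.getLast?_append, ih]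
    simp [Nat.even_add]

theorem sw_ne_sw_succ (n : ℕ) : sw α n ≠ sw α (n + 1) := by
  intro h
  have hlast := congrArg List.getLast? h
  simp only [getLast?_sw, Option.some.injEq, decide_eq_decide, Nat.even_add_one,
    iff_not_self] at hlast

theorem substWord_sw_sturmianSubst (n : ℕ) (w : List Bool) :
    substWord (sw α n) (sw α (n + 1)) (sturmianSubst (swExp α n) w) =
      substWord (sw α (n + 1)) (sw α (n + 2)) w := by
  rw [sturmianSubst, substWord_substWord, substWord_append, substWord_replicate_false, sw_add_two]
  simp

/-! ### Discrepancy and balance -/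

/-- The deviation of the numbers of letters `true` and `false` in `w` from the ratio `x : 1`. -/
def discrepancy (x : ℝ) (w : List Bool) : ℝ :=
  w.count true - x * w.count false

section Discrepancy

variable (x : ℝ)

@[simp]
theorem discrepancy_nil : discrepancy x [] = 0 := by
  simp [discrepancy]

@[simp]
theorem discrepancy_append (u w : List Bool) :
    discrepancy x (u ++ w) = discrepancy x u + discrepancy x w := by
  simp only [discrepancy, List.count_append, Nat.cast_add]
  ring

@[simp]
theorem discrepancy_cons (b : Bool) (w : List Bool) :
    discrepancy x (b :: w) = (if b then 1 else -x) + discrepancy x w := by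
  simp only [discrepancy, List.count_cons, Nat.cast_add]
  cases b <;> grind

@[simp]
theorem discrepancy_replicate_false (k : ℕ) :
    discrepancy x (List.replicate k false) = -(x * k) := by
  simp [discrepancy, List.count_replicate]

variable {x}

theorem discrepancy_nonneg_of_false_notMem {w : List Bool} (hw : false ∉ w) :
    0 ≤ discrepancy x w := by
  simp [discrepancy, List.count_eq_zero.mpr hw]

theorem discrepancy_sturmianSubst {a : ℕ} {y : ℝ} (hx : x ≠ 0) (hxy : a + y = x⁻¹)
    (w : List Bool) : discrepancy x (sturmianSubst a w) = -x * discrepancy y w := by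
  have hmul : x * (a + y) = 1 := by rw [hxy, mul_inv_cancel₀ hx]
  rw [sturmianSubst]
  induction w with
  | nil => simp
  | cons b w ih =>
    cases b with
    | false =>
      simp only [substWord_cons, discrepancy_append, discrepancy_cons, discrepancy_replicate_false,
        discrepancy_nil, Bool.false_eq_true, if_true, if_false, ih]
      linear_combination -hmul
    | true => simp [ih, mul_add]

theorem discrepancy_div_one_sub (h1 : α ≠ 1) (w : List Bool) :
    discrepancy (α / (1 - α)) w = (w.count true - α * w.length) / (1 - α) := by
  have hα : 1 - α ≠ 0 := sub_ne_zero.mpr h1.symm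
  have hlen : (w.length : ℝ) = w.count true + w.count false := by
    exact_mod_cast (List.count_true_add_count_false w).symm
  rw [discrepancy, hlen]
  field_simp
  ring

end Discrepancy

/-- All factors of the words in `L` have letters `true` and `false` nearly in the ratio `x : 1`. The
bound `1 + x` is the one for which `L` has ratio `α / (1 - α)` iff all factors `u` of its words
satisfy `|#true u - α |u|| < 1`. -/
def RatioBalanced (x : ℝ) (L : Set (List Bool)) : Prop :=
  ∀ w ∈ L, ∀ u, u <:+: w → |discrepancy x u| < 1 + x

/-- Every word of `L` is a prefix of arbitrarily long words of `L`. -/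
def RightExtendable {β : Type*} (L : Set (List β)) : Prop :=
  ∀ w ∈ L, ∀ k : ℕ, ∃ e, k ≤ e.length ∧ w ++ e ∈ L

theorem RatioBalanced.mono {x : ℝ} {L L' : Set (List Bool)} (h : RatioBalanced x L')
    (hL : L ⊆ L') : RatioBalanced x L :=
  fun w hw => h w (hL hw)

theorem RightExtendable.image_substWord {β : Type*} {A B : List β} (hA : A ≠ []) (hB : B ≠ [])
    {L : Set (List Bool)} (hL : RightExtendable L) : RightExtendable (substWord A B '' L) := by
  rintro _ ⟨w, hw, rfl⟩ k
  obtain ⟨e, hk, hwe⟩ := hL w hw k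
  exact ⟨substWord A B e, hk.trans (length_le_length_substWord hA hB e), w ++ e, hwe,
    substWord_append _ _ _ _⟩

section Desubstitution

variable {x y : ℝ} {a : ℕ} {L : Set (List Bool)} {u w : List Bool}

/-- Split `u` at its first `false` as `r ++ false :: t`. The block of that `false` ends in `true`,
and balance of the factor `true :: sturmianSubst a t` gives the sharp bound
`-1 < discrepancy y t`. -/
theorem RatioBalanced.neg_lt_discrepancy (hx : 0 < x) (hy : 0 ≤ y) (hxy : a + y = x⁻¹)
    (h : RatioBalanced x (sturmianSubst a '' L)) (hw : w ∈ L) (hu : u <:+: w) :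
    -(1 + y) < discrepancy y u := by
  by_cases hmem : false ∈ u
  · obtain ⟨r, t, rfl, hr⟩ := List.eq_append_cons_of_mem hmem
    obtain ⟨p, q, rfl⟩ := hu
    have hfactor : true :: sturmianSubst a t <:+: sturmianSubst a (p ++ (r ++ false :: t) ++ q) :=
      ⟨sturmianSubst a (p ++ r) ++ List.replicate a false, sturmianSubst a q, by
        simp [sturmianSubst]⟩
    have hbound := (abs_lt.mp (h _ ⟨_, hw, rfl⟩ _ hfactor)).2
    have ht : -1 < discrepancy y t := by
      rw [discrepancy_cons, discrepancy_sturmianSubst hx.ne' hxy] at hbound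
      simp only [if_true] at hbound
      nlinarith
    have hr_nonneg := discrepancy_nonneg_of_false_notMem (x := y) hr
    simp only [discrepancy_append, discrepancy_cons, Bool.false_eq_true, if_false]
    linarith
  · linarith [discrepancy_nonneg_of_false_notMem (x := y) hmem]

/-- Whatever follows `u`, its substituted word is followed by `falseᵃ`; the extension of `w` only
makes room for these letters. -/
theorem RatioBalanced.discrepancy_lt (hx : 0 < x) (hxy : a + y = x⁻¹) (hL : RightExtendable L)
    (h : RatioBalanced x (sturmianSubst a '' L)) (hw : w ∈ L) (hu : u <:+: w) :
    discrepancy y u < 1 + y := by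
  obtain ⟨e, he, hwe⟩ := hL w hw a
  obtain ⟨p, q, rfl⟩ := hu
  obtain ⟨z, hz⟩ : List.replicate a false <+: sturmianSubst a (q ++ e) :=
    replicate_false_prefix_sturmianSubst (by rw [List.length_append]; omega) le_rfl
  have hfactor : sturmianSubst a u ++ List.replicate a false <:+:
      sturmianSubst a (p ++ u ++ q ++ e) :=
    ⟨sturmianSubst a p, z, by
      rw [← List.append_assoc, List.append_assoc, hz]
      simp [sturmianSubst]⟩
  have hbound := (abs_lt.mp (h _ ⟨_, hwe, rfl⟩ _ hfactor)).1
  rw [discrepancy_append, discrepancy_sturmianSubst hx.ne' hxy, discrepancy_replicate_false]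
    at hbound
  have hmul : x * (a + y) = 1 := by rw [hxy, mul_inv_cancel₀ hx.ne']
  nlinarith

theorem RatioBalanced.of_image_sturmianSubst (hx : 0 < x) (hy : 0 ≤ y) (hxy : a + y = x⁻¹)
    (hL : RightExtendable L) (h : RatioBalanced x (sturmianSubst a '' L)) : RatioBalanced y L :=
  fun _ hw _ hu =>
    abs_lt.mpr ⟨h.neg_lt_discrepancy hx hy hxy hw hu, h.discrepancy_lt hx hxy hL hw hu⟩

theorem RatioBalanced.of_image_substWord_sw (h0 : 0 < α) (h1 : α < 1) {n : ℕ}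
    (hn : gaussMap^[n] α ≠ 0) (hL : RightExtendable L)
    (h : RatioBalanced (α / (1 - α)) (substWord (sw α n) (sw α (n + 1)) '' L)) :
    RatioBalanced (blockRatio α n) L := by
  induction n generalizing L with
  | zero => simpa [sw, blockRatio, substWord_true_false] using h
  | succ n ih =>
    have hn' := gaussMap_iterate_ne_zero_of_succ hn
    refine .of_image_sturmianSubst (blockRatio_pos h0 h1 hn') (blockRatio_pos h0 h1 hn).le
      (swExp_add_blockRatio_succ h0 h1 n) hL (ih hn' (hL.image_substWord (by simp) (by simp)) ?_)
    simpa only [Set.image_image, substWord_sw_sturmianSubst] using h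

end Desubstitution

/-! ### Factors of two-sided sequences -/

section Factors

variable (v : ℤ → Bool) (m : ℤ)

/-- In the definition of `wordAt` the list of naturals is cast to a list of integers before
mapping. -/
theorem wordAt_eq_map (n : ℕ) : wordAt v m n = (List.range n).map fun i : ℕ => v (m + i) := by
  simp [wordAt, List.map_eq_flatMap, List.flatMap_assoc]

@[simp]
theorem length_wordAt (n : ℕ) : (wordAt v m n).length = n := by
  simp [wordAt_eq_map]

@[simp]
theorem wordAt_zero : wordAt v m 0 = [] := rfl

@[simp]
theorem wordAt_one : wordAt v m 1 = [v m] := by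
  simp [wordAt_eq_map]

theorem wordAt_add (j k : ℕ) : wordAt v m (j + k) = wordAt v m j ++ wordAt v (m + j) k := by
  simp [wordAt_eq_map, List.range_add, add_assoc, Function.comp_def]

theorem wordAt_succ (k : ℕ) : wordAt v m (k + 1) = wordAt v m k ++ [v (m + k)] := by
  rw [wordAt_add, wordAt_one]

variable {v m}

theorem wordAt_eq_replicate {n : ℕ} {b : Bool} (h : ∀ k < n, v (m + k) = b) :
    wordAt v m n = List.replicate n b := by
  rw [List.eq_replicate_iff]
  simpa [wordAt_eq_map] using h

variable (v)

/-- The set of finite factors of a two-sided sequence. -/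
def factors : Set (List Bool) :=
  {w | ∃ (m : ℤ) (n : ℕ), wordAt v m n = w}

variable {v}

theorem wordAt_mem_factors (m : ℤ) (n : ℕ) : wordAt v m n ∈ factors v :=
  ⟨m, n, rfl⟩

theorem mem_factors_of_infix {u w : List Bool} (hw : w ∈ factors v) (hu : u <:+: w) :
    u ∈ factors v := by
  obtain ⟨m, n, rfl⟩ := hw
  obtain ⟨p, q, h⟩ := hu
  have hn : n = p.length + u.length + q.length := by
    simpa [add_assoc] using (congrArg List.length h).symm
  rw [hn, wordAt_add, wordAt_add] at h
  have hpu := (List.append_inj h (by simp)).1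
  exact ⟨_, _, (List.append_inj hpu (by simp)).2.symm⟩

theorem rightExtendable_factors : RightExtendable (factors v) := by
  rintro _ ⟨m, n, rfl⟩ k
  exact ⟨wordAt v (m + n) k, (length_wordAt _ _ _).ge, m, n + k, wordAt_add _ _ _ _⟩

end Factors

/-! ### Balance in the hull -/

theorem floor_add_eq_ite {R : Type*} [CommRing R] [LinearOrder R] [IsStrictOrderedRing R]
    [FloorRing R] (x : R) {a : R} (h0 : 0 ≤ a) (h1 : a < 1) :
    ⌊x + a⌋ = ⌊x⌋ + if 1 - a ≤ Int.fract x then 1 else 0 := by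
  have hx := Int.floor_add_fract x
  have hx0 := Int.fract_nonneg x
  have hx1 := Int.fract_lt_one x
  rw [Int.floor_eq_iff]
  split_ifs with h <;> push_cast <;> constructor <;> linarith

theorem count_true_wordAt_v0 (h0 : 0 ≤ α) (h1 : α < 1) (m : ℤ) (n : ℕ) :
    ((wordAt (v0 α) m n).count true : ℤ) = ⌊((m : ℝ) + n) * α⌋ - ⌊(m : ℝ) * α⌋ := by
  induction n with
  | zero => simp
  | succ n ih =>
    have hfloor := floor_add_eq_ite (((m : ℝ) + n) * α) h0 h1
    have hmul : ((m : ℝ) + (n + 1 : ℕ)) * α = (m + n) * α + α := by push_cast; ring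
    rw [wordAt_succ, List.count_append, Nat.cast_add, ih, hmul, hfloor]
    simp only [v0, Int.cast_add, Int.cast_natCast, List.count_singleton, beq_iff_eq,
      decide_eq_true_eq]
    split_ifs <;> push_cast <;> ring

theorem abs_count_true_wordAt_v0_sub_lt_one (h0 : 0 ≤ α) (h1 : α < 1) (m : ℤ) (n : ℕ) :
    |((wordAt (v0 α) m n).count true : ℝ) - α * n| < 1 := by
  have hcount : ((wordAt (v0 α) m n).count true : ℝ) = ⌊((m : ℝ) + n) * α⌋ - ⌊(m : ℝ) * α⌋ := by
    exact_mod_cast count_true_wordAt_v0 h0 h1 m n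
  have hend := Int.floor_le (((m : ℝ) + n) * α)
  have hend' := Int.lt_floor_add_one (((m : ℝ) + n) * α)
  have hstart := Int.floor_le ((m : ℝ) * α)
  have hstart' := Int.lt_floor_add_one ((m : ℝ) * α)
  rw [hcount, abs_lt]
  constructor <;> linarith

theorem factors_subset_of_mem_hull {v : ℤ → Bool} (hv : v ∈ hull α) :
    factors v ⊆ factors (v0 α) := by
  rintro _ ⟨m, n, rfl⟩
  have hopen : IsOpen ((Set.Ico m (m + n)).pi fun k => {v k}) :=
    isOpen_set_pi (Set.finite_Ico _ _) fun _ _ => isOpen_discrete _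
  obtain ⟨_, hagree, d, rfl⟩ := mem_closure_iff.mp hv _ hopen fun _ _ => rfl
  refine ⟨m - d, n, ?_⟩
  rw [wordAt_eq_map, wordAt_eq_map, List.map_inj_left]
  intro i hi
  rw [List.mem_range] at hi
  have := hagree (m + i) ⟨by omega, by omega⟩
  simpa [sub_add_eq_add_sub] using this

theorem ratioBalanced_factors_of_mem_hull (h0 : 0 ≤ α) (h1 : α < 1) {v : ℤ → Bool}
    (hv : v ∈ hull α) : RatioBalanced (α / (1 - α)) (factors v) := by
  intro w hw u hu
  obtain ⟨m, n, rfl⟩ := factors_subset_of_mem_hull hv (mem_factors_of_infix hw hu)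
  have hα : 0 < 1 - α := sub_pos.mpr h1
  have hbound : 1 + α / (1 - α) = 1 / (1 - α) := by field_simp; ring
  rw [discrepancy_div_one_sub h1.ne, abs_div, abs_of_pos hα, hbound, length_wordAt]
  gcongr
  exact abs_count_true_wordAt_v0_sub_lt_one h0 h1 m n

/-! ### Codings of partitions -/

section Coding

variable {v : ℤ → Bool} {n : ℕ} {c : ℤ → ℤ}

/-- The coding of a partition into blocks `sw α n` and `sw α (n + 1)`, in the convention of
`substWord`: `false` marks the blocks `sw α (n + 1)`. -/
def blockCoding (α : ℝ) (v : ℤ → Bool) (n : ℕ) (c : ℤ → ℤ) (i : ℤ) : Bool :=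
  decide (¬ BlockIs α v c i (n + 1))

theorem blockCoding_eq_false_iff {i : ℤ} :
    blockCoding α v n c i = false ↔ BlockIs α v c i (n + 1) := by
  simp [blockCoding]

theorem blockCoding_eq_true_iff {i : ℤ} :
    blockCoding α v n c i = true ↔ ¬ BlockIs α v c i (n + 1) := by
  simp [blockCoding]

theorem BlockIs.not_succ {i : ℤ} (h : BlockIs α v c i n) : ¬ BlockIs α v c i (n + 1) := by
  intro h'
  have hlen : qd α n = qd α (n + 1) := by exact_mod_cast h.1.symm.trans h'.1
  exact sw_ne_sw_succ n (h.2.symm.trans (hlen ▸ h'.2))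

variable (hc : ∀ i : ℤ, BlockIs α v c i n ∨ BlockIs α v c i (n + 1))
include hc

theorem exists_wordAt_eq_block (i : ℤ) :
    ∃ K : ℕ, c (i + 1) = c i + K ∧
      wordAt v (c i + 1) K = if blockCoding α v n c i then sw α n else sw α (n + 1) := by
  by_cases h : BlockIs α v c i (n + 1)
  · exact ⟨_, by linarith [h.1], by simpa [blockCoding_eq_false_iff.mpr h] using h.2⟩
  · have h' := (hc i).resolve_right h
    exact ⟨_, by linarith [h'.1], by simpa [blockCoding_eq_true_iff.mpr h] using h'.2⟩

theorem exists_substWord_blockCoding_eq (i : ℤ) (N : ℕ) :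
    ∃ M : ℕ, c (i + N) = c i + M ∧
      substWord (sw α n) (sw α (n + 1)) (wordAt (blockCoding α v n c) i N) =
        wordAt v (c i + 1) M := by
  induction N with
  | zero => exact ⟨0, by simp, by simp⟩
  | succ N ih =>
    obtain ⟨M, hM, hwordM⟩ := ih
    obtain ⟨K, hK, hwordK⟩ := exists_wordAt_eq_block hc (i + N)
    refine ⟨M + K, ?_, ?_⟩
    · push_cast
      rw [← add_assoc, hK, hM, add_assoc]
    · rw [hM, add_right_comm] at hwordK
      simp [wordAt_succ, wordAt_add, hwordM, hwordK]

theorem ratioBalanced_factors_blockCoding (h0 : 0 < α) (h1 : α < 1) (hv : v ∈ hull α)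
    (hn : gaussMap^[n] α ≠ 0) :
    RatioBalanced (blockRatio α n) (factors (blockCoding α v n c)) := by
  refine .of_image_substWord_sw h0 h1 hn rightExtendable_factors
    ((ratioBalanced_factors_of_mem_hull h0.le h1 hv).mono ?_)
  rintro _ ⟨_, ⟨i, N, rfl⟩, rfl⟩
  obtain ⟨M, -, hM⟩ := exists_substWord_blockCoding_eq hc i N
  exact hM ▸ wordAt_mem_factors _ _

end Coding

/-! ### Runs -/

theorem exists_maximal_run {P : ℤ → Prop} {K : ℕ}
    (hK : ∀ (j : ℤ) (l : ℕ), (∀ m < l, P (j + m)) → l ≤ K) {i : ℤ} (hi : P i) :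
    ∃ (i₀ : ℤ) (l : ℕ), i₀ ≤ i ∧ i < i₀ + l ∧ (∀ m < l, P (i₀ + m)) ∧
      ¬ P (i₀ - 1) ∧ ¬ P (i₀ + l) := by
  let runLengths : Set ℕ := {l | ∃ i₀ : ℤ, i₀ ≤ i ∧ i < i₀ + l ∧ ∀ m < l, P (i₀ + m)}
  have hbdd : BddAbove runLengths := ⟨K, fun l ⟨i₀, _, _, hrun⟩ => hK i₀ l hrun⟩
  have hne : runLengths.Nonempty := ⟨1, i, le_rfl, by simp, by simpa using hi⟩
  obtain ⟨i₀, hle, hlt, hrun⟩ := Nat.sSup_mem hne hbdd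
  have hmax : sSup runLengths + 1 ∉ runLengths := fun h =>
    (Nat.lt_succ_self _).not_ge (le_csSup hbdd h)
  refine ⟨i₀, sSup runLengths, hle, hlt, hrun, fun hleft => hmax ?_, fun hright => hmax ?_⟩
  · refine ⟨i₀ - 1, by omega, by push_cast; omega, fun m hm => ?_⟩
    cases m with
    | zero => simpa using hleft
    | succ m => simpa using hrun m (by omega)
  · refine ⟨i₀, hle, by push_cast; omega, fun m hm => ?_⟩
    obtain hm | rfl := Nat.lt_succ_iff_lt_or_eq.mp hm
    exacts [hrun m hm, hright]

section RatioBalancedRuns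

variable {x : ℝ} {w : ℤ → Bool}

theorem RatioBalanced.abs_discrepancy_wordAt_lt (h : RatioBalanced x (factors w)) (i : ℤ)
    (l : ℕ) : |discrepancy x (wordAt w i l)| < 1 + x :=
  h _ (wordAt_mem_factors i l) _ List.infix_rfl

theorem RatioBalanced.not_true_true (h : RatioBalanced x (factors w)) (hx : x ≤ 1) (i : ℤ) :
    ¬ (w i = true ∧ w (i + 1) = true) := by
  rintro ⟨hi, hi'⟩
  have hword : wordAt w i 2 = [true, true] := by simp [wordAt_succ, hi, hi']
  have hbound := (abs_lt.mp (h.abs_discrepancy_wordAt_lt i 2)).2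
  simp only [hword, discrepancy_cons, discrepancy_nil, if_true] at hbound
  linarith

theorem RatioBalanced.length_run_le (h : RatioBalanced x (factors w)) (hx : 0 < x) {i : ℤ}
    {l : ℕ} (hrun : ∀ m < l, w (i + m) = false) : l ≤ ⌊x⁻¹⌋₊ + 1 := by
  have hbound := (abs_lt.mp (h.abs_discrepancy_wordAt_lt i l)).1
  rw [wordAt_eq_replicate hrun, discrepancy_replicate_false] at hbound
  rw [← Nat.floor_add_one (inv_nonneg.mpr hx.le)]
  refine Nat.le_floor ?_
  have hmul : x * x⁻¹ = 1 := mul_inv_cancel₀ hx.ne'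
  nlinarith

theorem RatioBalanced.le_length_run (h : RatioBalanced x (factors w)) (hx : 0 < x) {i : ℤ}
    {l : ℕ} (hleft : w (i - 1) = true) (hrun : ∀ m < l, w (i + m) = false)
    (hright : w (i + l) = true) : ⌊x⁻¹⌋₊ ≤ l := by
  have hword : wordAt w (i - 1) (1 + l + 1) = true :: List.replicate l false ++ [true] := by
    have hend : i - 1 + ((1 + l : ℕ) : ℤ) = i + l := by push_cast; ring
    rw [wordAt_succ, wordAt_add, wordAt_one, hend]
    simp [wordAt_eq_replicate hrun, hleft, hright]
  have hbound := (abs_lt.mp (h.abs_discrepancy_wordAt_lt (i - 1) (1 + l + 1))).2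
  simp only [hword, List.cons_append, discrepancy_cons, discrepancy_append,
    discrepancy_replicate_false, discrepancy_nil, if_true] at hbound
  have hlt : x⁻¹ < l + 1 := by
    rw [inv_lt_iff_one_lt_mul₀ hx]
    linarith
  exact Nat.lt_succ_iff.mp ((Nat.floor_lt (inv_nonneg.mpr hx.le)).mpr (by exact_mod_cast hlt))

end RatioBalancedRuns

end

/-- For rational `α` the condition `gaussMap^[n] α ≠ 0` says that the continued fraction expansion
of `α` reaches the partial quotient `aₙ₊₁`. -/
theorem partition_block_structure_general {α : ℝ} (h0 : 0 < α) (h1 : α < 1)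
    {v : ℤ → Bool} (hv : v ∈ hull α) {n : ℕ} (hn : 1 ≤ n) (hα : gaussMap^[n] α ≠ 0) {c : ℤ → ℤ}
    (hc : ∀ i : ℤ, BlockIs α v c i n ∨ BlockIs α v c i (n + 1)) :
    (∀ i : ℤ, ¬ (BlockIs α v c i n ∧ BlockIs α v c (i + 1) n)) ∧
    (∀ i : ℤ, BlockIs α v c i (n + 1) →
      ∃ (i₀ : ℤ) (l : ℕ), 0 < l ∧ i₀ ≤ i ∧ i < i₀ + l ∧
        (∀ m : ℕ, m < l → BlockIs α v c (i₀ + m) (n + 1)) ∧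
        ¬ BlockIs α v c (i₀ - 1) (n + 1) ∧ ¬ BlockIs α v c (i₀ + l) (n + 1) ∧
        (l = pq α n ∨ l = pq α n + 1)) := by
  have hratio : blockRatio α n = gaussMap^[n] α := by
    obtain ⟨k, rfl⟩ := Nat.exists_eq_add_of_le' hn
    rfl
  have hbal := hratio ▸ ratioBalanced_factors_blockCoding hc h0 h1 hv hα
  have hx := gaussMap_iterate_mem_Ico h0.le h1 n
  have hpos : 0 < gaussMap^[n] α := hx.1.lt_of_ne' hα
  refine ⟨fun i ⟨hi, hi'⟩ => hbal.not_true_true hx.2.le i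
    ⟨blockCoding_eq_true_iff.mpr hi.not_succ, blockCoding_eq_true_iff.mpr hi'.not_succ⟩, ?_⟩
  intro i hi
  simp only [← blockCoding_eq_false_iff] at hi ⊢
  obtain ⟨i₀, l, hle, hlt, hrun, hleft, hright⟩ :=
    exists_maximal_run (P := (blockCoding α v n c · = false))
      (fun _ _ => hbal.length_run_le hpos) hi
  have hupper : l ≤ pq α n + 1 := hbal.length_run_le hpos hrun
  have hlower : pq α n ≤ l := hbal.le_length_run hpos (by simpa using hleft) hrun
    (by simpa using hright)
  exact ⟨i₀, l, by omega, hle, hlt, hrun, hleft, hright, by omega⟩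

/-- Corollary 2.2. In the `(n-1, n)`-partition of `v ∈ Ω`:
(1) two consecutive blocks are never both `s_{n-1}`; (2) every `sₙ`-block lies in a
finite maximal run of consecutive `sₙ`-blocks of length exactly `a_{n+1}` or
`a_{n+1} + 1`.  (Here `a_{n+1} = pq α n`.) -/
theorem partition_block_structure (α : ℝ) (hirr : Irrational α) (h0 : 0 < α) (h1 : α < 1)
    (v : ℤ → Bool) (hv : v ∈ hull α) (n : ℕ) (hn : 1 ≤ n)
    (c : ℤ → ℤ) (hc : IsPartition α v n c) :
    (∀ i : ℤ, ¬ (BlockIs α v c i n ∧ BlockIs α v c (i + 1) n)) ∧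
    (∀ i : ℤ, BlockIs α v c i (n + 1) →
      ∃ (i₀ : ℤ) (l : ℕ), 0 < l ∧ i₀ ≤ i ∧ i < i₀ + l ∧
        (∀ m : ℕ, m < l → BlockIs α v c (i₀ + m) (n + 1)) ∧
        ¬ BlockIs α v c (i₀ - 1) (n + 1) ∧ ¬ BlockIs α v c (i₀ + l) (n + 1) ∧
        (l = pq α n ∨ l = pq α n + 1)) := by
  exact partition_block_structure_general h0 h1 hv hn (irrational_gaussMap_iterate hirr n).ne_zero
    hc.2.2.2.2.2

end
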